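/- Under two-stage weighted cluster sampling with second-stage sample size m, the variance of the estimator μ̂_{w,m} = (1/n) Σ_{k=1}^n μ̂_{I_k} equals Var(μ̂_{w,m}) = (1/(nM)) · ( Σ_{i=1}^N M_i (μ_i − μ(G))² + (1/m) · Σ_{i : M_i > m} ((M_i − m)/(M_i − 1)) · M_i · μ_i (1 − μ_i) ). -/

import Mathlib

/-- The entity cluster with subject id `i`: the set of triples assigned to cluster `i`
by the cluster assignment `cl`. -/
def cluster {M N : ℕ} (cl : Fin M → Fin N) (i : Fin N) : Finset (Fin M) :=
  Finset.univ.filter (fun t => cl t = i)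

/-- `Msize cl i` is the size `Mᵢ` of the `i`-th entity cluster. -/
def Msize {M N : ℕ} (cl : Fin M → Fin N) (i : Fin N) : ℕ := (cluster cl i).card

/-- The possible second-stage samples from cluster `i`: all subsets of cluster `i` of
size `min (Msize cl i) m`, drawn uniformly at random without replacement. -/
def secondStage {M N : ℕ} (cl : Fin M → Fin N) (m : ℕ) (i : Fin N) :
    Finset (Finset (Fin M)) :=
  (cluster cl i).powersetCard (min (Msize cl i) m)

/-- Expectation of a statistic `g` of the two-stage weighted cluster sample.  An
outcome consists of the first-stage cluster indices `I : Fin n → Fin N` (drawn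
independently with probabilities `P(I k = i) = Msize cl i / M`) together with, for each
draw `k`, a second-stage sample `S k` drawn uniformly among the subsets of cluster
`I k` of size `min (Msize cl (I k)) m`, independently across draws. -/
noncomputable def twcsExpect {M N : ℕ} (n m : ℕ) (cl : Fin M → Fin N)
    (g : (I : Fin n → Fin N) →
      ((k : Fin n) → k ∈ (Finset.univ : Finset (Fin n)) → Finset (Fin M)) → ℝ) : ℝ :=
  ∑ I : Fin n → Fin N,
    ∑ S ∈ Finset.pi Finset.univ (fun k => secondStage cl m (I k)),
      (∏ k : Fin n,
        ((Msize cl (I k) : ℝ) / (M : ℝ)) * (1 / ((secondStage cl m (I k)).card : ℝ)))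
        * g I S

/-- The TWCS estimator `μ̂_{w,m} = (1/n) ∑ k μ̂_{I k}`, where `μ̂_{I k}` is the mean
correctness label of the triples drawn from the `k`-th sampled cluster. -/
noncomputable def twcsEstimator {M N : ℕ} (n : ℕ) (f : Fin M → ℝ)
    (_I : Fin n → Fin N)
    (S : (k : Fin n) → k ∈ (Finset.univ : Finset (Fin n)) → Finset (Fin M)) : ℝ :=
  (1 / (n : ℝ)) * ∑ k : Fin n,
    (∑ t ∈ S k (Finset.mem_univ k), f t) / ((S k (Finset.mem_univ k)).card : ℝ)

/-- The accuracy `μ i = τ i / M i` of cluster `i` (the fraction of its triples that are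
correct). -/
noncomputable def clusterAccuracy {M N : ℕ} (cl : Fin M → Fin N) (f : Fin M → ℝ)
    (i : Fin N) : ℝ :=
  (∑ t ∈ cluster cl i, f t) / (Msize cl i : ℝ)

section helpers
open Finset

lemma aux_double {α : Type*} [DecidableEq α] (C : Finset α) (r : ℕ) (g : α → Finset α → ℝ) :
    ∑ s ∈ C.powersetCard (r + 1), ∑ t ∈ s, g t (s.erase t)
      = ∑ t ∈ C, ∑ s ∈ (C.erase t).powersetCard r, g t s := by
  rw [Finset.sum_sigma', Finset.sum_sigma']
  refine Finset.sum_bij' (fun x _ => ⟨x.2, x.1.erase x.2⟩) (fun x _ => ⟨insert x.1 x.2, x.1⟩)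
    ?_ ?_ ?_ ?_ ?_
  · rintro ⟨s, t⟩ h
    simp only [mem_sigma, mem_powersetCard] at h ⊢
    obtain ⟨⟨h1, h2⟩, h3⟩ := h
    refine ⟨h1 h3, erase_subset_erase _ h1, ?_⟩
    rw [card_erase_of_mem h3]; omega
  · rintro ⟨t, s⟩ h
    simp only [mem_sigma, mem_powersetCard] at h ⊢
    obtain ⟨h3, h1, h2⟩ := h
    have ht : t ∉ s := fun h => by simpa using h1 h
    refine ⟨⟨?_, ?_⟩, mem_insert_self _ _⟩
    · exact insert_subset h3 (h1.trans (erase_subset _ _))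
    · rw [card_insert_of_notMem ht, h2]
  · rintro ⟨s, t⟩ h
    simp only [mem_sigma, mem_powersetCard] at h
    simp [insert_erase h.2]
  · rintro ⟨t, s⟩ h
    simp only [mem_sigma, mem_powersetCard] at h
    obtain ⟨h3, h1, h2⟩ := h
    have ht : t ∉ s := fun h => by simpa using h1 h
    simp [erase_insert ht]
  · rintro ⟨s, t⟩ h
    rfl

lemma aux_choose (K r : ℕ) (hK : 1 ≤ K) :
    (K : ℝ) * ((K - 1).choose r : ℝ) = (r + 1) * (K.choose (r + 1) : ℝ) := by
  obtain ⟨k, rfl⟩ : ∃ k, K = k + 1 := ⟨K - 1, by omega⟩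
  have := Nat.add_one_mul_choose_eq k r
  simp only [Nat.add_sub_cancel]
  rw [mul_comm ((r : ℝ) + 1)]
  exact_mod_cast this

lemma aux_first {α : Type*} [DecidableEq α] (C : Finset α) (r : ℕ) (f : α → ℝ) :
    (#C : ℝ) * ∑ s ∈ C.powersetCard r, ∑ t ∈ s, f t
      = r * ((#C).choose r : ℝ) * ∑ t ∈ C, f t := by
  rcases r with _ | r
  · simp
  rcases C.eq_empty_or_nonempty with rfl | hC
  · simp
  rw [aux_double C r (fun t _ => f t)]
  have : ∀ t ∈ C, ∑ s ∈ (C.erase t).powersetCard r, f t = ((#C - 1).choose r : ℝ) * f t := by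
    intro t ht
    rw [sum_const, card_powersetCard, card_erase_of_mem ht, nsmul_eq_mul]
  rw [sum_congr rfl this, ← mul_sum, ← mul_assoc, aux_choose _ _ hC.card_pos]
  push_cast; ring

lemma aux_second {α : Type*} [DecidableEq α] (C : Finset α) (r : ℕ) (hr : 1 ≤ r) (f : α → ℝ) :
    (#C : ℝ) * ((#C : ℝ) - 1) * ∑ s ∈ C.powersetCard r, (∑ t ∈ s, f t) ^ 2
      = r * ((#C).choose r : ℝ) * (((#C : ℝ) - r) * ∑ t ∈ C, f t ^ 2
        + (r - 1) * (∑ t ∈ C, f t) ^ 2) := by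
  obtain ⟨r, rfl⟩ : ∃ k, r = k + 1 := ⟨r - 1, by omega⟩
  rcases C.eq_empty_or_nonempty with rfl | hC
  · simp
  have h0 : ∀ s ∈ C.powersetCard (r + 1), (∑ t ∈ s, f t) ^ 2
      = ∑ t ∈ s, (f t * (f t + ∑ u ∈ s.erase t, f u)) := by
    intro s _
    rw [sq, sum_mul]
    refine sum_congr rfl fun t ht => ?_
    rw [add_sum_erase s f ht]
  rw [sum_congr rfl h0, aux_double C r (fun t s => f t * (f t + ∑ u ∈ s, f u))]
  have h1 : ∀ t ∈ C, ((#C : ℝ) - 1) * ∑ s ∈ (C.erase t).powersetCard r, f t * (f t + ∑ u ∈ s, f u)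
      = ((#C - 1).choose r : ℝ) * (((#C : ℝ) - 1 - r) * f t ^ 2 + r * (∑ t ∈ C, f t) * f t) := by
    intro t ht
    have e := aux_first (C.erase t) r f
    have hc : ((#(C.erase t) : ℕ) : ℝ) = (#C : ℝ) - 1 := by
      rw [card_erase_of_mem ht, Nat.cast_sub hC.card_pos, Nat.cast_one]
    rw [hc, sum_erase_eq_sub ht, card_erase_of_mem ht] at e
    rw [← mul_sum, sum_add_distrib, sum_const, card_powersetCard, card_erase_of_mem ht,
      nsmul_eq_mul]
    linear_combination f t * e
  rw [mul_assoc, mul_sum, sum_congr rfl h1, ← mul_sum, ← mul_assoc, aux_choose _ _ hC.card_pos,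
    sum_add_distrib, ← mul_sum, ← mul_sum]
  push_cast; ring

/-- single-draw expectation -/
noncomputable def oneE {M N : ℕ} (m : ℕ) (cl : Fin M → Fin N)
    (h : Fin N → Finset (Fin M) → ℝ) : ℝ :=
  ∑ i, ∑ s ∈ secondStage cl m i,
    ((Msize cl i : ℝ) / (M : ℝ)) * (1 / ((secondStage cl m i).card : ℝ)) * h i s

lemma expect_prod {M N : ℕ} (n m : ℕ) (cl : Fin M → Fin N)
    (h : Fin n → Fin N → Finset (Fin M) → ℝ) :
    twcsExpect n m cl (fun I S => ∏ k, h k (I k) (S k (mem_univ k)))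
      = ∏ k, oneE m cl (h k) := by
  unfold twcsExpect oneE
  rw [Finset.prod_univ_sum, Fintype.piFinset_univ]
  refine sum_congr rfl fun I _ => ?_
  rw [Finset.prod_sum]
  refine sum_congr rfl fun S _ => ?_
  rw [← prod_mul_distrib, ← Finset.prod_attach univ]

lemma expect_add {M N : ℕ} (n m : ℕ) (cl : Fin M → Fin N) (g h) :
    twcsExpect n m cl (fun I S => g I S + h I S) = twcsExpect n m cl g + twcsExpect n m cl h := by
  simp only [twcsExpect, mul_add, sum_add_distrib]

lemma expect_smul {M N : ℕ} (n m : ℕ) (cl : Fin M → Fin N) (c : ℝ) (g) :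
    twcsExpect n m cl (fun I S => c * g I S) = c * twcsExpect n m cl g := by
  simp only [twcsExpect, mul_sum]
  refine sum_congr rfl fun I _ => sum_congr rfl fun S _ => by ring

lemma expect_sum {M N : ℕ} {ι : Type*} (n m : ℕ) (cl : Fin M → Fin N) (T : Finset ι) 
    (g : ι → (Fin n → Fin N) →
      ((k : Fin n) → k ∈ (Finset.univ : Finset (Fin n)) → Finset (Fin M)) → ℝ) :
    twcsExpect n m cl (fun I S => ∑ k ∈ T, g k I S) = ∑ k ∈ T, twcsExpect n m cl (g k) := by
  classical
  induction T using Finset.induction_on with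
  | empty => simp [twcsExpect]
  | insert a s ha ih => simp only [sum_insert ha, expect_add, ih]

lemma expect_one_draw {M N : ℕ} (n m : ℕ) (cl : Fin M → Fin N) (h1 : oneE m cl (fun _ _ => 1) = 1)
    (h : Fin N → Finset (Fin M) → ℝ) (k : Fin n) :
    twcsExpect n m cl (fun I S => h (I k) (S k (mem_univ k))) = oneE m cl h := by
  have := expect_prod n m cl (fun j i s => if j = k then h i s else 1)
  simp only [prod_ite_eq', mem_univ, if_true] at this
  rw [this, prod_eq_single k]
  · simp
  · intro b _ hb; simp [hb, h1]
  · simp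

lemma expect_two_draw {M N : ℕ} (n m : ℕ) (cl : Fin M → Fin N)
    (h : Fin N → Finset (Fin M) → ℝ) (h0 : oneE m cl h = 0) (k l : Fin n) (hkl : k ≠ l) :
    twcsExpect n m cl (fun I S => h (I k) (S k (mem_univ k)) * h (I l) (S l (mem_univ l))) = 0 := by
  have := expect_prod n m cl
    (fun j i s => (if j = k then h i s else 1) * (if j = l then h i s else 1))
  simp only [prod_mul_distrib, prod_ite_eq', mem_univ, if_true] at this
  rw [this]
  refine prod_eq_zero (mem_univ k) ?_
  simpa [hkl] using h0

lemma expect_sq {M N : ℕ} (n m : ℕ) (cl : Fin M → Fin N) (h1 : oneE m cl (fun _ _ => 1) = 1)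
    (h : Fin N → Finset (Fin M) → ℝ) (h0 : oneE m cl h = 0) :
    twcsExpect n m cl (fun I S => (∑ k, h (I k) (S k (mem_univ k))) ^ 2)
      = n * oneE m cl (fun i s => h i s ^ 2) := by
  simp only [sq, sum_mul_sum]
  rw [expect_sum]
  simp only [expect_sum]
  have : ∀ k : Fin n, ∑ l : Fin n, twcsExpect n m cl
      (fun I S => h (I k) (S k (mem_univ k)) * h (I l) (S l (mem_univ l)))
      = oneE m cl (fun i s => h i s * h i s) := by
    intro k
    rw [sum_eq_single k]
    · exact expect_one_draw n m cl h1 (fun i s => h i s * h i s) k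
    · intro l _ hl; exact expect_two_draw n m cl h h0 k l hl.symm
    · simp
  simp [this]

variable {M N : ℕ} 

lemma card_ss_pos (m : ℕ) (cl : Fin M → Fin N) (i : Fin N) : 0 < #(secondStage cl m i) := by
  rw [secondStage, card_powersetCard]
  exact Nat.choose_pos (min_le_left _ _)

lemma sum_Msize (cl : Fin M → Fin N) : ∑ i, (Msize cl i : ℝ) = M := by
  have := card_eq_sum_card_fiberwise (f := cl) (s := univ) (t := univ) (by simp)
  simp only [card_univ, Fintype.card_fin] at this
  simp only [Msize, cluster]
  rw [← Nat.cast_sum, ← this]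

lemma sum_clusters (cl : Fin M → Fin N) (f : Fin M → ℝ) :
    ∑ i, ∑ t ∈ cluster cl i, f t = ∑ t, f t :=
  sum_fiberwise univ cl f

lemma inner_first (m : ℕ) (hm : 1 ≤ m) (cl : Fin M → Fin N) (hcl : ∀ i, 1 ≤ Msize cl i)
    (f : Fin M → ℝ) (i : Fin N) :
    ∑ s ∈ secondStage cl m i, (∑ t ∈ s, f t) / (#s : ℝ)
      = #(secondStage cl m i) * clusterAccuracy cl f i := by
  have hK := hcl i
  have e := aux_first (cluster cl i) (min (Msize cl i) m) f
  have h : ∀ s ∈ secondStage cl m i, (∑ t ∈ s, f t) / (#s : ℝ)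
      = (∑ t ∈ s, f t) / ((min (Msize cl i) m : ℕ) : ℝ) := by
    intro s hs
    rw [(mem_powersetCard.1 hs).2]
  rw [sum_congr rfl h, ← sum_div, clusterAccuracy]
  unfold secondStage
  rw [card_powersetCard]
  change (Msize cl i : ℝ) * _ = _ * ((Msize cl i).choose _ : ℝ) * _ at e
  change _ = ((Msize cl i).choose _ : ℝ) * _
  have a : (0 : ℝ) < Msize cl i := by exact_mod_cast hK
  have b : (0 : ℝ) < ((min (Msize cl i) m : ℕ) : ℝ) := by
    exact_mod_cast (lt_min hK hm : 0 < min (Msize cl i) m)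
  rw [div_eq_iff b.ne', ← mul_right_inj' a.ne', e]
  field_simp

lemma inner_second (m : ℕ) (hm : 1 ≤ m) (cl : Fin M → Fin N) (hcl : ∀ i, 1 ≤ Msize cl i)
    (f : Fin M → ℝ) (hf : ∀ t, f t = 0 ∨ f t = 1) (i : Fin N) :
    ∑ s ∈ secondStage cl m i, ((∑ t ∈ s, f t) / (#s : ℝ)) ^ 2
      = #(secondStage cl m i) * (clusterAccuracy cl f i ^ 2 + if m < Msize cl i then
        (1 / (m : ℝ)) * (((Msize cl i : ℝ) - (m : ℝ)) / ((Msize cl i : ℝ) - 1)) *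
          (clusterAccuracy cl f i * (1 - clusterAccuracy cl f i)) else 0) := by
  have hK := hcl i
  have a : (0 : ℝ) < Msize cl i := by exact_mod_cast hK
  split_ifs with hlt
  · have e := aux_second (cluster cl i) m hm f
    have hmin : min (Msize cl i) m = m := min_eq_right hlt.le
    have h : ∀ s ∈ secondStage cl m i, ((∑ t ∈ s, f t) / (#s : ℝ)) ^ 2
        = (∑ t ∈ s, f t) ^ 2 / (m : ℝ) ^ 2 := by
      intro s hs
      rw [(mem_powersetCard.1 hs).2, hmin, div_pow]
    have hq : ∑ t ∈ cluster cl i, f t ^ 2 = ∑ t ∈ cluster cl i, f t := by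
      refine sum_congr rfl fun t _ => ?_
      rcases hf t with h | h <;> simp [h]
    rw [hq] at e
    rw [sum_congr rfl h, ← sum_div, clusterAccuracy]
    unfold secondStage
    rw [card_powersetCard, hmin]
    change (Msize cl i : ℝ) * ((Msize cl i : ℝ) - 1) * _
      = _ * ((Msize cl i).choose _ : ℝ) * (((Msize cl i : ℝ) - _) * _ + _) at e
    change _ = ((Msize cl i).choose _ : ℝ) * _
    have b : (0 : ℝ) < m := by exact_mod_cast hm
    have c : (0 : ℝ) < (Msize cl i : ℝ) - 1 := by
      have : (m : ℝ) < Msize cl i := by exact_mod_cast hlt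
      have : (1 : ℝ) ≤ m := by exact_mod_cast hm
      linarith
    rw [div_eq_iff (by positivity), ← mul_right_inj' (mul_pos a c).ne', e]
    generalize (∑ t ∈ cluster cl i, f t) = F
    have c' := c.ne'
    field_simp
    ring
  · have hmin : min (Msize cl i) m = #(cluster cl i) := min_eq_left (not_lt.1 hlt)
    rw [secondStage, hmin]
    simp [clusterAccuracy, Msize]

lemma oneE_inner (m : ℕ) (cl : Fin M → Fin N) (h : Fin N → Finset (Fin M) → ℝ) (v : Fin N → ℝ)
    (hv : ∀ i, ∑ s ∈ secondStage cl m i, h i s = #(secondStage cl m i) * v i) :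
    oneE m cl h = (1 / (M : ℝ)) * ∑ i, (Msize cl i : ℝ) * v i := by
  unfold oneE
  rw [mul_sum]
  refine sum_congr rfl fun i _ => ?_
  have : (#(secondStage cl m i) : ℝ) ≠ 0 := by exact_mod_cast (card_ss_pos m cl i).ne'
  rw [← mul_sum, hv]
  field_simp

end helpers

/-- **Variance of the two-stage weighted cluster sampling estimator.**
A knowledge graph consists of `M ≥ 1` triples partitioned into `N` nonempty entity
clusters by `cl`; each triple `t` carries a correctness label `f t ∈ {0,1}`,
`μ i = τ i / M i` is the accuracy of cluster `i`, and `μ(G) = (1/M) ∑ t f t`.  Under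
two-stage weighted cluster sampling with `n ≥ 1` first-stage draws and second-stage
sample size `m ≥ 1`, the variance `E[(μ̂_{w,m} - E[μ̂_{w,m}])²]` of the estimator
`μ̂_{w,m} = (1/n) ∑ k μ̂_{I k}` equals
`(1/(nM)) (∑ i M i (μ i - μ(G))² + (1/m) ∑_{i : M i > m} ((M i - m)/(M i - 1)) M i μ i (1 - μ i))`. -/
theorem twcs_estimator_variance (M N n m : ℕ) (hM : 1 ≤ M) (hn : 1 ≤ n) (hm : 1 ≤ m)
    (cl : Fin M → Fin N) (hcl : ∀ i, 1 ≤ Msize cl i)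
    (f : Fin M → ℝ) (hf : ∀ t, f t = 0 ∨ f t = 1) :
    twcsExpect n m cl (fun I S =>
        (twcsEstimator n f I S - twcsExpect n m cl (twcsEstimator n f)) ^ 2)
      = (1 / ((n : ℝ) * (M : ℝ))) *
          ((∑ i : Fin N, (Msize cl i : ℝ) *
              (clusterAccuracy cl f i - (1 / (M : ℝ)) * ∑ t, f t) ^ 2)
            + (1 / (m : ℝ)) *
              ∑ i ∈ Finset.univ.filter (fun i : Fin N => m < Msize cl i),
                (((Msize cl i : ℝ) - (m : ℝ)) / ((Msize cl i : ℝ) - 1)) *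
                  (Msize cl i : ℝ) *
                  (clusterAccuracy cl f i * (1 - clusterAccuracy cl f i))) := by
  have hM0 : (M : ℝ) ≠ 0 := by positivity
  have hn0 : (n : ℝ) ≠ 0 := by positivity
  set μ : ℝ := (1 / (M : ℝ)) * ∑ t, f t with hμ
  set X : Fin N → Finset (Fin M) → ℝ := fun _ s => (∑ t ∈ s, f t) / (s.card : ℝ) with hX
  have h1 : oneE m cl (fun _ _ => 1) = 1 := by
    rw [oneE_inner m cl _ (fun _ => 1) (by simp)]
    simp [sum_Msize, hM0]
  have hacc : ∑ i, (Msize cl i : ℝ) * clusterAccuracy cl f i = ∑ t, f t := by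
    rw [← sum_clusters cl f]
    refine Finset.sum_congr rfl fun i _ => ?_
    have : (Msize cl i : ℝ) ≠ 0 := by have := hcl i; positivity
    unfold clusterAccuracy
    field_simp
  have hEX : oneE m cl X = μ := by
    rw [oneE_inner m cl X (clusterAccuracy cl f) (inner_first m hm cl hcl f), hacc]
  have hmean : twcsExpect n m cl (twcsEstimator n f) = μ := by
    unfold twcsEstimator
    rw [expect_smul, expect_sum]
    rw [Finset.sum_congr rfl (fun k _ => expect_one_draw n m cl h1 X k), hEX]
    simp [hn0]
  rw [hmean]
  have hY0 : oneE m cl (fun i s => X i s - μ) = 0 := by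
    rw [oneE_inner m cl _ (fun i => clusterAccuracy cl f i - μ)]
    · simp only [mul_sub, Finset.sum_sub_distrib, hacc, ← Finset.sum_mul, sum_Msize]
      rw [hμ]; field_simp; ring
    · intro i
      rw [Finset.sum_sub_distrib, inner_first m hm cl hcl f]
      simp; ring
  have hg : (fun (I : Fin n → Fin N)
      (S : (k : Fin n) → k ∈ (Finset.univ : Finset (Fin n)) → Finset (Fin M)) =>
        (twcsEstimator n f I S - μ) ^ 2)
      = fun I S => (1 / (n : ℝ) ^ 2) *
        (∑ k, (fun i s => X i s - μ) (I k) (S k (Finset.mem_univ k))) ^ 2 := by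
    funext I S
    simp only [Finset.sum_sub_distrib, twcsEstimator, hX]
    simp only [Finset.sum_const, Finset.card_univ, Fintype.card_fin, nsmul_eq_mul]
    field_simp
  rw [hg, expect_smul, expect_sq n m cl h1 _ hY0]
  rw [oneE_inner m cl _ (fun i => (clusterAccuracy cl f i - μ) ^ 2 + if m < Msize cl i then
        (1 / (m : ℝ)) * (((Msize cl i : ℝ) - (m : ℝ)) / ((Msize cl i : ℝ) - 1)) *
          (clusterAccuracy cl f i * (1 - clusterAccuracy cl f i)) else 0)]
  · simp only [mul_add, Finset.sum_add_distrib, Finset.sum_filter, Finset.mul_sum]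
    congr 1
    · refine Finset.sum_congr rfl fun i _ => ?_
      field_simp
    · refine Finset.sum_congr rfl fun i _ => ?_
      split_ifs
      · generalize ((Msize cl i : ℝ) - (m : ℝ)) / ((Msize cl i : ℝ) - 1) = q
        field_simp
      · simp
  · intro i
    have e1 := inner_first m hm cl hcl f i
    have e2 := inner_second m hm cl hcl f hf i
    have : ∀ s ∈ secondStage cl m i, (X i s - μ) ^ 2 = ((∑ t ∈ s, f t) / (s.card : ℝ)) ^ 2
        - 2 * μ * ((∑ t ∈ s, f t) / (s.card : ℝ)) + μ ^ 2 := fun s _ => by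
      simp only [hX]; ring
    rw [Finset.sum_congr rfl this, Finset.sum_add_distrib, Finset.sum_sub_distrib,
      ← Finset.mul_sum, e1, e2, Finset.sum_const, nsmul_eq_mul]
    ring
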